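/- Let A be an associative unital algebra over a field F, q ∈ F nonzero with (q-q^{-1})(q^2-q^{-2}) ≠ 0, and let A₀, X ∈ A satisfy the q-Dolan/Grady relation A₀^3 X - [3]_q A₀^2 X A₀ + [3]_q A₀ X A₀^2 - X A₀^3 = (q^2-q^{-2})^2 (X A₀ - A₀ X), where [3]_q = q^2+q^{-2}+1. Define L(X) = X + (q A₀^2 X - (q+q^{-1}) A₀ X A₀ + q^{-1} X A₀^2)/((q-q^{-1})(q^2-q^{-2})) and M(X) = X + (q^{-1} A₀^2 X - (q+q^{-1}) A₀ X A₀ + q X A₀^2)/((q-q^{-1})(q^2-q^{-2})). Then M(L(X)) = X and L(M(X)) = X, where M and L are extended by the same formulas (note L(X) and M(X) again satisfy the same q-Dolan/Grady relation with A₀). -/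

import Mathlib

/-!
Left and right multiplication by `a` commute, so expressions in them factor like polynomials in two
commuting variables. Let `(s, t) = (q, q⁻¹)` and `D X = aX - Xa`, `P X = s aX - t Xa`,
`Q X = t aX - s Xa`. Then `L = 1 + c D P` and `M = 1 + c D Q`, where `c` is the inverse of
`(s - t)(s² - t²)`, and the `q`-Dolan/Grady relation reads `D P Q X = -(s² - t²)² D X`. Since
`P + Q = (s + t) D`, the product of `L` and `M` is `1 + c (s + t) D² + c² D (D P Q)`, and on `X` the
last two terms cancel because `c (s + t) = c² (s² - t²)²`.
-/

theorem one_add_smul_mul_apply_apply_eq_self {R V : Type*} [CommRing R] [AddCommGroup V]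
    [Module R V] {D P Q : Module.End R V} {c σ κ : R} {x : V} (hDP : Commute D P)
    (hsum : P + Q = σ • D) (hx : D (P (Q x)) = -(κ • D x)) (hc : c * σ = c ^ 2 * κ) :
    (1 + c • (D * P)) ((1 + c • (D * Q)) x) = x := by
  have hprod : (1 + c • (D * P)) * (1 + c • (D * Q))
      = 1 + (c * σ) • (D * D) + c ^ 2 • (D * (D * P * Q)) :=
    calc (1 + c • (D * P)) * (1 + c • (D * Q))
        = 1 + c • (D * (P + Q)) + c ^ 2 • (D * (P * D) * Q) := by
          simp only [mul_add, add_mul, mul_one, one_mul, smul_mul_assoc, mul_smul_comm, mul_assoc]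
          module
      _ = 1 + (c * σ) • (D * D) + c ^ 2 • (D * (D * P * Q)) := by
          rw [hsum, ← hDP.eq, mul_smul_comm, smul_smul, mul_assoc D (D * P) Q]
  calc (1 + c • (D * P)) ((1 + c • (D * Q)) x)
      = x + (c * σ) • D (D x) + c ^ 2 • D (D (P (Q x))) := LinearMap.congr_fun hprod x
    _ = x := by
      rw [hx, hc, map_neg, map_smul]
      module

section NonUnital

variable {R A : Type*} [CommRing R] [NonUnitalRing A] [Module R A] [IsScalarTower R A A]
  [SMulCommClass R A A]

/-- The two-parameter commutator `X ↦ s aX - t Xa`, as a linear map in `X`. The parameters `(1, 1)`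
give the commutator with `a` and `(q, q⁻¹)` the `q`-commutator `[a, X]_q`. -/
def skewCommutator (s t : R) (a : A) : Module.End R A :=
  s • LinearMap.mulLeft R a - t • LinearMap.mulRight R a

theorem skewCommutator_apply (s t : R) (a X : A) :
    skewCommutator s t a X = s • (a * X) - t • (X * a) :=
  rfl

theorem commute_skewCommutator (s t s' t' : R) (a : A) :
    Commute (skewCommutator s t a) (skewCommutator s' t' a) := by
  have hlr : Commute (LinearMap.mulLeft R a) (LinearMap.mulRight R a) :=
    LinearMap.commute_mulLeft_right a a
  have hl : Commute (LinearMap.mulLeft R a) (skewCommutator s' t' a) :=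
    ((Commute.refl _).smul_right s').sub_right (hlr.smul_right t')
  have hr : Commute (LinearMap.mulRight R a) (skewCommutator s' t' a) :=
    (hlr.symm.smul_right s').sub_right ((Commute.refl _).smul_right t')
  exact (hl.smul_left s).sub_left (hr.smul_left t)

theorem skewCommutator_add_swap (s t : R) (a : A) :
    skewCommutator s t a + skewCommutator t s a = (s + t) • skewCommutator (1 : R) 1 a := by
  unfold skewCommutator
  module

/-- The map `X ↦ X + c [a, s aX - t Xa]`, whose values `L` at `(s, t) = (q, q⁻¹)` and `M` at
`(q⁻¹, q)`, for `c` the inverse of `(q - q⁻¹)(q² - q⁻²)`, describe the Lusztig automorphism of the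
`q`-Onsager algebra and its inverse. -/
def lusztigMap (c s t : R) (a : A) : Module.End R A :=
  1 + c • (skewCommutator (1 : R) 1 a * skewCommutator s t a)

theorem lusztigMap_apply_swap_apply {c s t : R} {a X : A}
    (hc : c * ((s - t) * (s ^ 2 - t ^ 2)) = 1)
    (hX : skewCommutator (1 : R) 1 a (skewCommutator s t a (skewCommutator t s a X))
      = -((s ^ 2 - t ^ 2) ^ 2 • skewCommutator (1 : R) 1 a X)) :
    lusztigMap c s t a (lusztigMap c t s a X) = X :=
  one_add_smul_mul_apply_apply_eq_self (commute_skewCommutator 1 1 s t a)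
    (skewCommutator_add_swap s t a) hX (by linear_combination (-c * (s + t)) * hc)

end NonUnital

section Unital

variable {R A : Type*} [CommRing R] [Ring A] [Algebra R A]

theorem lusztigMap_apply (c s t : R) (a X : A) :
    lusztigMap c s t a X
      = X + c • (s • (a ^ 2 * X) - (s + t) • (a * X * a) + t • (X * a ^ 2)) := by
  change X + c • skewCommutator (1 : R) 1 a (skewCommutator s t a X) = _
  simp only [skewCommutator_apply, pow_two, mul_sub, sub_mul, mul_smul_comm, smul_mul_assoc,
    mul_assoc]
  module

theorem skewCommutator_one_one_skewCommutator_skewCommutator_swap (s t : R) (a X : A) :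
    skewCommutator (1 : R) 1 a (skewCommutator s t a (skewCommutator t s a X))
      = (s * t) • (a ^ 3 * X) - (s ^ 2 + t ^ 2 + s * t) • (a ^ 2 * X * a)
        + (s ^ 2 + t ^ 2 + s * t) • (a * X * a ^ 2) - (s * t) • (X * a ^ 3) := by
  simp only [skewCommutator_apply, pow_succ, pow_zero, one_mul, mul_sub, sub_mul, mul_smul_comm,
    smul_mul_assoc, mul_assoc]
  module

theorem stmt_16_general (c s t : R) (hc : c * ((s - t) * (s ^ 2 - t ^ 2)) = 1) (a X : A)
    (hDG : (s * t) • (a ^ 3 * X) - (s ^ 2 + t ^ 2 + s * t) • (a ^ 2 * X * a)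
        + (s ^ 2 + t ^ 2 + s * t) • (a * X * a ^ 2) - (s * t) • (X * a ^ 3)
        = (s ^ 2 - t ^ 2) ^ 2 • (X * a - a * X)) :
    let L : A → A := fun Z => Z + c •
      (s • (a ^ 2 * Z) - (s + t) • (a * Z * a) + t • (Z * a ^ 2))
    let M : A → A := fun Z => Z + c •
      (t • (a ^ 2 * Z) - (s + t) • (a * Z * a) + s • (Z * a ^ 2))
    M (L X) = X ∧ L (M X) = X := by
  intro L M
  have hL : L = lusztigMap c s t a :=
    funext fun Z => (lusztigMap_apply c s t a Z).symm
  have hM : M = lusztigMap c t s a :=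
    funext fun Z => by rw [lusztigMap_apply, add_comm t s]
  have hst : skewCommutator (1 : R) 1 a (skewCommutator s t a (skewCommutator t s a X))
      = -((s ^ 2 - t ^ 2) ^ 2 • skewCommutator (1 : R) 1 a X) := by
    rw [skewCommutator_one_one_skewCommutator_skewCommutator_swap, hDG, skewCommutator_apply,
      one_smul, one_smul, ← smul_neg, neg_sub]
  have hts : skewCommutator (1 : R) 1 a (skewCommutator t s a (skewCommutator s t a X))
      = -((t ^ 2 - s ^ 2) ^ 2 • skewCommutator (1 : R) 1 a X) := by
    rw [sub_sq_comm, ← hst]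
    exact congrArg _ (LinearMap.congr_fun (commute_skewCommutator t s s t a).eq X)
  rw [hL, hM]
  exact ⟨lusztigMap_apply_swap_apply (by linear_combination hc) hts,
    lusztigMap_apply_swap_apply hc hst⟩

end Unital

theorem stmt_16 {F : Type*} [Field F] (q : F) (hq : q ≠ 0)
    (hq1 : q - q⁻¹ ≠ 0) (hq2 : q^2 - q⁻¹^2 ≠ 0)
    {A : Type*} [Ring A] [Algebra F A] (A₀ X : A)
    (hDG : A₀^3 * X - (q^2 + q⁻¹^2 + 1) • (A₀^2 * X * A₀)
        + (q^2 + q⁻¹^2 + 1) • (A₀ * X * A₀^2) - X * A₀^3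
        = (q^2 - q⁻¹^2)^2 • (X * A₀ - A₀ * X)) :
    let L : A → A := fun Z => Z + ((q - q⁻¹) * (q^2 - q⁻¹^2))⁻¹ •
      (q • (A₀^2 * Z) - (q + q⁻¹) • (A₀ * Z * A₀) + q⁻¹ • (Z * A₀^2))
    let M : A → A := fun Z => Z + ((q - q⁻¹) * (q^2 - q⁻¹^2))⁻¹ •
      (q⁻¹ • (A₀^2 * Z) - (q + q⁻¹) • (A₀ * Z * A₀) + q • (Z * A₀^2))
    M (L X) = X ∧ L (M X) = X := by
  exact stmt_16_general _ q q⁻¹ (inv_mul_cancel₀ (mul_ne_zero hq1 hq2)) A₀ X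
    (by simpa only [mul_inv_cancel₀ hq, one_smul] using hDG)
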